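/- arXiv:2012.02563 — 2 statements merged into one kernel-verified Lean document; each statement's English description precedes it below -/
import Mathlib

section
/- For every positive integer n, the number of triples (A,B,C) of finite sets with A, B ⊆ {1,…,2n}, C ⊆ {n+1,…,3n}, |A| = |B| = |C| = n, A ⊆ B Δ {1,…,n} (where Δ denotes symmetric difference), and B \ {1,…,n} ⊆ C, equals ∑_{k=0}^{n} C(n,k)^4. -/
open Finset in
/-- The `n`-subsets of `U` containing `T` correspond to the `(n - #T)`-subsets of `U \ T`. -/
theorem card_powersetCard_filter_superset {α : Type*} [DecidableEq α] {T U : Finset α}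
    (hTU : T ⊆ U) {n : ℕ} (hn : #T ≤ n) :
    #{C ∈ powersetCard n U | T ⊆ C} = (#U - #T).choose (n - #T) := by
  rw [← card_sdiff_of_subset hTU, ← card_powersetCard]
  refine card_nbij' (· \ T) (· ∪ T) ?_ ?_ ?_ ?_
  · intro C hC
    simp only [coe_filter, mem_powersetCard, Set.mem_ofPred_eq] at hC
    simp only [mem_coe, mem_powersetCard]
    exact ⟨sdiff_subset_sdiff hC.1.1 Subset.rfl, by rw [card_sdiff_of_subset hC.2, hC.1.2]⟩
  · intro C hC
    simp only [mem_coe, mem_powersetCard, subset_sdiff] at hC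
    simp only [coe_filter, mem_powersetCard, Set.mem_ofPred_eq]
    refine ⟨⟨union_subset hC.1.1 hTU, ?_⟩, subset_union_right⟩
    rw [card_union_of_disjoint hC.1.2]
    omega
  · intro C hC
    simp only [coe_filter, mem_powersetCard, Set.mem_ofPred_eq] at hC
    exact sdiff_union_of_subset hC.2
  · intro C hC
    simp only [mem_coe, mem_powersetCard, subset_sdiff] at hC
    exact union_sdiff_cancel_right hC.1.2

open Finset in
/-- The `n`-subsets of a set that have exactly `j` elements outside its subset `S`. -/
theorem card_powersetCard_filter_card_sdiff {α : Type*} [DecidableEq α] {S U : Finset α}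
    (hSU : S ⊆ U) {n j : ℕ} (hj : j ≤ n) :
    #{B ∈ powersetCard n U | #(B \ S) = j} =
      (#S).choose (n - j) * (#U - #S).choose j := by
  rw [← card_sdiff_of_subset hSU, ← card_powersetCard (n - j) S,
    ← card_powersetCard j (U \ S), ← card_product]
  refine card_nbij' (fun B => (B ∩ S, B \ S)) (fun p => p.1 ∪ p.2) ?_ ?_ ?_ ?_
  · intro B hB
    simp only [coe_filter, mem_powersetCard, Set.mem_ofPred_eq] at hB
    simp only [mem_coe, mem_product, mem_powersetCard]
    have h := card_inter_add_card_sdiff B S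
    exact ⟨⟨inter_subset_right, by omega⟩, sdiff_subset_sdiff hB.1.1 Subset.rfl, hB.2⟩
  · rintro ⟨P, Q⟩ h
    simp only [mem_coe, mem_product, mem_powersetCard, subset_sdiff] at h
    obtain ⟨⟨hP, hPc⟩, ⟨hQU, hQS⟩, hQc⟩ := h
    simp only [coe_filter, mem_powersetCard, Set.mem_ofPred_eq]
    refine ⟨⟨union_subset (hP.trans hSU) hQU, ?_⟩, ?_⟩
    · rw [card_union_of_disjoint (hQS.symm.mono_left hP)]
      omega
    · rw [union_sdiff_distrib, sdiff_eq_empty_iff_subset.2 hP, empty_union,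
        sdiff_eq_self_of_disjoint hQS, hQc]
  · intro B _
    exact (union_comm _ _).trans (sdiff_union_inter B S)
  · rintro ⟨P, Q⟩ h
    simp only [mem_coe, mem_product, mem_powersetCard, subset_sdiff] at h
    obtain ⟨⟨hP, -⟩, ⟨-, hQS⟩, -⟩ := h
    simp only [Prod.mk.injEq]
    constructor
    · rw [union_inter_distrib_right, inter_eq_left.2 hP, disjoint_iff_inter_eq_empty.1 hQS,
        union_empty]
    · rw [union_sdiff_distrib, sdiff_eq_empty_iff_subset.2 hP, empty_union,
        sdiff_eq_self_of_disjoint hQS]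

open Finset in
theorem Nat.sum_choose_mul_choose_sub (m n k : ℕ) :
    ∑ i ∈ range (k + 1), m.choose i * n.choose (k - i) = (m + n).choose k := by
  rw [Nat.add_choose_eq, Nat.sum_antidiagonal_eq_sum_range_succ_mk]

open Finset in
/-- Vandermonde's identity with a lower shift. -/
theorem Nat.sum_choose_sub_mul_choose {a m : ℕ} (b : ℕ) (hm : m ≤ a) :
    ∑ i ∈ range (a + 1), (if m ≤ i then (a - m).choose (i - m) else 0) * b.choose i =
      (a + b - m).choose a := by
  rw [show a + b - m = b + (a - m) by omega, ← Nat.sum_choose_mul_choose_sub]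
  refine sum_congr rfl fun i hi => ?_
  rw [mem_range] at hi
  rw [mul_comm]
  congr 1
  split_ifs with h
  · exact Nat.choose_symm_of_eq_add (by omega)
  · exact (Nat.choose_eq_zero_of_lt (by omega)).symm

open Finset in
/-- A special case of the Riordan–Surányi identity. -/
theorem Nat.sum_choose_mul_choose_mul_choose_add (a b : ℕ) :
    ∑ i ∈ range (a + 1), a.choose i * b.choose i * (a + b + i).choose (a + b) =
      (a + b).choose a ^ 2 := by
  have expand : ∀ i ∈ range (a + 1), a.choose i * b.choose i * (a + b + i).choose (a + b) =
      ∑ m ∈ range (a + 1), (a + b).choose m * a.choose m *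
        ((if m ≤ i then (a - m).choose (i - m) else 0) * b.choose i) := by
    intro i hi
    rw [mem_range] at hi
    have h : (a + b + i).choose (a + b) =
        ∑ m ∈ range (a + 1), if m ≤ i then (a + b).choose m * i.choose m else 0 := by
      rw [Nat.choose_symm_add, ← Nat.sum_choose_mul_choose_sub, ← sum_filter]
      refine sum_congr ?_ fun m hm => ?_
      · ext m
        simp only [mem_range, mem_filter]
        omega
      · rw [mem_filter] at hm
        rw [Nat.choose_symm hm.2]
    rw [h, mul_sum]
    refine sum_congr rfl fun m _ => ?_
    split_ifs with hmi
    · linear_combination (b.choose i * (a + b).choose m) *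
        Nat.choose_mul (n := a) (k := i) (s := m) hmi
    · simp
  rw [sum_congr rfl expand, sum_comm]
  have inner : ∀ m ∈ range (a + 1), ∑ i ∈ range (a + 1), (a + b).choose m * a.choose m *
        ((if m ≤ i then (a - m).choose (i - m) else 0) * b.choose i) =
      (a + b).choose a * (b.choose m * a.choose (a - m)) := by
    intro m hm
    rw [mem_range] at hm
    rw [← mul_sum, Nat.sum_choose_sub_mul_choose b (by omega), Nat.choose_symm (by omega)]
    have h1 := Nat.choose_mul (n := a + b) (k := a + m) (s := a) (by omega)
    have h2 := Nat.choose_mul (n := a + b) (k := a + m) (s := m) (by omega)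
    simp only [Nat.add_sub_cancel_left, Nat.add_sub_cancel] at h1 h2
    rw [← Nat.choose_symm_add] at h2
    linear_combination a.choose m * (h1 - h2)
  rw [sum_congr rfl inner, ← mul_sum, Nat.sum_choose_mul_choose_sub, add_comm b a, sq]

open Finset in
theorem Nat.sum_choose_sq_mul_choose_mul_choose (n : ℕ) :
    ∑ j ∈ range (n + 1), n.choose j ^ 2 * (2 * j).choose n * (2 * n - j).choose (n - j) =
      ∑ k ∈ range (n + 1), n.choose k ^ 4 := by
  have expand : ∀ j ∈ range (n + 1),
      n.choose j ^ 2 * (2 * j).choose n * (2 * n - j).choose (n - j) =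
      ∑ k ∈ range (n + 1), n.choose k ^ 2 *
        ((n - k).choose (n - j) * k.choose (n - j) * (n + (n - j)).choose n) := by
    intro j hj
    rw [mem_range] at hj
    rw [two_mul j, ← Nat.sum_choose_mul_choose_sub, mul_sum, sum_mul]
    refine sum_congr rfl fun k hk => ?_
    rw [mem_range] at hk
    rw [Nat.choose_symm_add (a := n) (b := n - j), show n + (n - j) = 2 * n - j by omega]
    have h1 : n.choose j * j.choose k = n.choose k * (n - k).choose (n - j) := by
      by_cases h : k ≤ j
      · rw [Nat.choose_mul h]
        congr 1
        exact Nat.choose_symm_of_eq_add (by omega)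
      · rw [Nat.choose_eq_zero_of_lt (n := j) (by omega),
          Nat.choose_eq_zero_of_lt (n := n - k) (by omega)]
        simp
    have h2 : n.choose j * j.choose (n - k) = n.choose k * k.choose (n - j) := by
      by_cases h : n - k ≤ j
      · rw [Nat.choose_mul h, Nat.choose_symm (by omega)]
        congr 1
        rw [show n - (n - k) = k by omega]
        exact Nat.choose_symm_of_eq_add (by omega)
      · rw [Nat.choose_eq_zero_of_lt (n := j) (by omega),
          Nat.choose_eq_zero_of_lt (n := k) (by omega)]
        simp
    calc _ = (n.choose j * j.choose k) * (n.choose j * j.choose (n - k)) *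
          (2 * n - j).choose (n - j) := by ring
      _ = _ := by rw [h1, h2]; ring
  rw [sum_congr rfl expand, sum_comm]
  refine sum_congr rfl fun k hk => ?_
  rw [mem_range] at hk
  rw [← mul_sum]
  have reflect := sum_range_reflect
    (fun i => (n - k).choose i * k.choose i * (n + i).choose n) (n + 1)
  simp only [Nat.add_sub_cancel] at reflect
  rw [reflect]
  have truncate : ∑ i ∈ range (n + 1), (n - k).choose i * k.choose i * (n + i).choose n =
      ∑ i ∈ range (k + 1), k.choose i * (n - k).choose i * (n + i).choose n := by
    symm
    rw [sum_congr rfl fun i _ => by rw [mul_comm (k.choose i)]]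
    refine sum_subset (range_subset_range.2 (by omega)) fun i _ hi => ?_
    rw [mem_range] at hi
    rw [Nat.choose_eq_zero_of_lt (n := k) (by omega)]
    simp
  have key := Nat.sum_choose_mul_choose_mul_choose_add k (n - k)
  rw [show k + (n - k) = n by omega] at key
  rw [truncate, key]
  ring

open Finset in
theorem card_symmDiff_of_card_eq {α : Type*} [DecidableEq α] {B S : Finset α}
    (h : #B = #S) : #(symmDiff B S) = 2 * #(B \ S) := by
  rw [symmDiff_def, sup_eq_union, card_union_of_disjoint disjoint_sdiff_sdiff,
    ← card_sdiff_comm h, two_mul]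

theorem triple_count_second (n : ℕ) (hn : 0 < n) :
    (((((Finset.Icc 1 (2 * n)).powerset ×ˢ (Finset.Icc 1 (2 * n)).powerset) ×ˢ
        (Finset.Icc (n + 1) (3 * n)).powerset).filter
        (fun p : (Finset ℕ × Finset ℕ) × Finset ℕ =>
          p.1.1.card = n ∧ p.1.2.card = n ∧ p.2.card = n ∧
            p.1.1 ⊆ symmDiff p.1.2 (Finset.Icc 1 n) ∧ p.1.2 \ Finset.Icc 1 n ⊆ p.2)).card) =
      ∑ k ∈ Finset.range (n + 1), (n.choose k) ^ 4 := by
  open Finset in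
  have hSU : Icc 1 n ⊆ Icc 1 (2 * n) := Icc_subset_Icc_right (by omega)
  have hS : #(Icc 1 n) = n := by simp
  have maps : ∀ p ∈ (((Icc 1 (2 * n)).powerset ×ˢ (Icc 1 (2 * n)).powerset) ×ˢ
        (Icc (n + 1) (3 * n)).powerset).filter
        (fun p : (Finset ℕ × Finset ℕ) × Finset ℕ =>
          p.1.1.card = n ∧ p.1.2.card = n ∧ p.2.card = n ∧
            p.1.1 ⊆ symmDiff p.1.2 (Icc 1 n) ∧ p.1.2 \ Icc 1 n ⊆ p.2),
      p.1.2 ∈ powersetCard n (Icc 1 (2 * n)) := by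
    intro p hp
    simp only [mem_filter, mem_product, mem_powerset] at hp
    exact mem_powersetCard.2 ⟨hp.1.1.2, hp.2.2.1⟩
  have fiber : ∀ B ∈ powersetCard n (Icc 1 (2 * n)),
      #{p ∈ (((Icc 1 (2 * n)).powerset ×ˢ (Icc 1 (2 * n)).powerset) ×ˢ
        (Icc (n + 1) (3 * n)).powerset).filter
        (fun p : (Finset ℕ × Finset ℕ) × Finset ℕ =>
          p.1.1.card = n ∧ p.1.2.card = n ∧ p.2.card = n ∧
            p.1.1 ⊆ symmDiff p.1.2 (Icc 1 n) ∧ p.1.2 \ Icc 1 n ⊆ p.2) | p.1.2 = B} =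
      (2 * #(B \ Icc 1 n)).choose n *
        (2 * n - #(B \ Icc 1 n)).choose (n - #(B \ Icc 1 n)) := by
    intro B hB
    rw [mem_powersetCard] at hB
    have hBU : symmDiff B (Icc 1 n) ⊆ Icc 1 (2 * n) :=
      symmDiff_subset_union.trans (union_subset hB.1 hSU)
    have hTU : B \ Icc 1 n ⊆ Icc (n + 1) (3 * n) := by
      intro x hx
      have hx' := mem_sdiff.1 hx
      have hx1 := mem_Icc.1 (hB.1 hx'.1)
      have hx2 := hx'.2
      rw [mem_Icc] at hx2 ⊢
      omega
    have hT : #(B \ Icc 1 n) ≤ n := (card_le_card sdiff_subset).trans hB.2.le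
    have hU : #(Icc (n + 1) (3 * n)) = 2 * n := by
      rw [Nat.card_Icc]
      omega
    rw [← card_symmDiff_of_card_eq (hB.2.trans hS.symm), ← card_powersetCard]
    nth_rw 3 [← hU]
    rw [← card_powersetCard_filter_superset hTU hT, ← card_product]
    refine card_nbij' (fun p => (p.1.1, p.2)) (fun q => ((q.1, B), q.2)) ?_ ?_ ?_ ?_
    · rintro ⟨⟨A, B'⟩, C⟩ h
      simp only [mem_coe, mem_filter, mem_product, mem_powerset] at h
      simp only [mem_coe, mem_filter, mem_product, mem_powersetCard]
      obtain ⟨h, rfl⟩ := h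
      tauto
    · rintro ⟨A, C⟩ h
      simp only [mem_coe, mem_filter, mem_product, mem_powersetCard] at h
      simp only [mem_coe, mem_filter, mem_product, mem_powerset]
      have := h.1.1.trans hBU
      tauto
    · rintro ⟨⟨A, B'⟩, C⟩ h
      simp only [mem_coe, mem_filter] at h
      simp [h.2]
    · rintro ⟨A, C⟩ _
      rfl
  rw [card_eq_sum_card_fiberwise maps, sum_congr rfl fiber,
    ← sum_fiberwise_of_maps_to (t := range (n + 1)) (g := fun B => #(B \ Icc 1 n)) ?_,
    ← Nat.sum_choose_sq_mul_choose_mul_choose]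
  · refine sum_congr rfl fun j hj => ?_
    rw [mem_range] at hj
    have hj' : j ≤ n := by omega
    rw [sum_congr rfl fun B hB => by rw [(mem_filter.1 hB).2], sum_const,
      card_powersetCard_filter_card_sdiff hSU hj', hS, Nat.choose_symm hj', smul_eq_mul,
      Nat.card_Icc, show 2 * n + 1 - 1 - n = n by omega]
    ring
  · intro B hB
    rw [mem_powersetCard] at hB
    rw [mem_range]
    have := card_le_card (sdiff_subset (s := B) (t := Icc 1 n))
    omega
end

section
/- For all nonnegative integers n and m with n ≤ m, ∑_{k=0}^{min(m−n,n)} C(m−n,k) · C(n,n−k) · C(2k,n) · C(m−k,n−k) = ∑_{k=0}^{min(m−n,n)} C(n,k) · C(m−n,n−k) · C(m−n,k) · C(n,k). -/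
open Finset

/-- Vandermonde's identity as a sum over a range. -/
theorem add_choose_eq_sum_range (a b k : ℕ) :
    (a + b).choose k = ∑ i ∈ range (k + 1), a.choose i * b.choose (k - i) := by
  rw [Nat.add_choose_eq]
  exact Nat.sum_antidiagonal_eq_sum_range_succ (fun i j => a.choose i * b.choose j) k

theorem choose_mul_choose_sub_comm (n i j : ℕ) :
    n.choose i * (n - i).choose j = n.choose j * (n - j).choose i := by
  have h₁ := Nat.choose_mul (n := n) (Nat.le_add_right i j)
  have h₂ := Nat.choose_mul (n := n) (Nat.le_add_left j i)
  rw [Nat.add_sub_cancel_left] at h₁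
  rw [Nat.add_sub_cancel] at h₂
  rw [← h₁, ← h₂, Nat.choose_symm_add]

theorem sum_choose_mul_choose_mul_choose (a b l : ℕ) :
    ∑ i ∈ range (b + 1), a.choose i * b.choose i * i.choose l =
      b.choose l * (a + b - l).choose b := by
  rcases lt_or_ge b l with hbl | hlb
  · rw [Nat.choose_eq_zero_of_lt hbl, zero_mul]
    refine sum_eq_zero fun i hi => ?_
    rw [Nat.choose_eq_zero_of_lt (by have := mem_range.1 hi; omega : i < l), mul_zero]
  · rw [Nat.add_sub_assoc hlb, add_choose_eq_sum_range, mul_sum]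
    refine sum_congr rfl fun i hi => ?_
    have hib : i ≤ b := Nat.lt_succ_iff.1 (mem_range.1 hi)
    have h := choose_mul_choose_sub_comm b (b - i) l
    rw [Nat.choose_symm hib, Nat.sub_sub_self hib] at h
    rw [mul_assoc, h]
    ring

/-- Riordan's expansion of a product of two binomial coefficients with the same upper index. -/
theorem sum_choose_mul_choose_mul_add_choose (x a b : ℕ) :
    ∑ i ∈ range (b + 1), a.choose i * b.choose i * (x + i).choose (a + b) =
      x.choose a * x.choose b := by
  have expand : ∀ i, a.choose i * b.choose i * (x + i).choose (a + b) =
      ∑ l ∈ range (a + b + 1),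
        a.choose i * b.choose i * i.choose l * x.choose (a + b - l) := fun i => by
    rw [add_comm x i, add_choose_eq_sum_range, mul_sum]
    exact sum_congr rfl fun l _ => by ring
  simp_rw [expand]
  rw [sum_comm]
  simp_rw [← sum_mul, sum_choose_mul_choose_mul_choose]
  have truncate : ∑ l ∈ range (a + 1),
      b.choose l * (a + b - l).choose b * x.choose (a + b - l) =
      ∑ l ∈ range (a + b + 1), b.choose l * (a + b - l).choose b * x.choose (a + b - l) := by
    refine sum_subset (range_subset_range.2 (by omega)) fun l hl hla => ?_
    rw [mem_range] at hl hla
    rw [Nat.choose_eq_zero_of_lt (by omega : a + b - l < b)]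
    simp
  have factor : ∀ l ∈ range (a + 1),
      b.choose l * (a + b - l).choose b * x.choose (a + b - l) =
        x.choose b * (b.choose l * (x - b).choose (a - l)) := fun l hl => by
    rw [mem_range] at hl
    have h := Nat.choose_mul (n := x) (by omega : b ≤ a + b - l)
    rw [show a + b - l - b = a - l by omega] at h
    linear_combination b.choose l * h
  rw [← truncate, sum_congr rfl factor, ← mul_sum, ← add_choose_eq_sum_range]
  rcases le_or_gt b x with hbx | hxb
  · rw [Nat.add_sub_cancel' hbx, mul_comm]
  · simp [Nat.choose_eq_zero_of_lt hxb]

theorem choose_product_rearrange {n i j : ℕ} (p : ℕ) (hi : i ≤ n) (hj : j ≤ n) :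
    p.choose (n - i) * n.choose i * (p + i).choose i *
        ((n - i).choose j * (n - i).choose (n - j)) =
      n.choose j ^ 2 * ((n - j).choose i * j.choose i * (p + i).choose n) := by
  have h₁ := Nat.choose_mul (n := p + i) hi
  have h₂ := choose_mul_choose_sub_comm n i j
  have h₃ := choose_mul_choose_sub_comm n i (n - j)
  rw [Nat.add_sub_cancel] at h₁
  rw [Nat.choose_symm hj, Nat.sub_sub_self hj] at h₃
  calc _ = (p + i).choose i * p.choose (n - i) *
        (n.choose i * ((n - i).choose j * (n - i).choose (n - j))) := by ring
    _ = (p + i).choose n * (n.choose i * (n - i).choose j) *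
        (n.choose i * (n - i).choose (n - j)) := by rw [← h₁]; ring
    _ = _ := by rw [h₂, h₃]; ring

theorem sum_range_min_succ_eq {p n : ℕ} {f : ℕ → ℕ} (hf : ∀ k, p < k → f k = 0) :
    ∑ k ∈ range (min p n + 1), f k = ∑ k ∈ range (n + 1), f k := by
  refine sum_subset (range_subset_range.2 (by omega)) fun k hk hk' => hf k ?_
  rw [mem_range] at hk hk'
  omega

theorem generalized_strehl (n m : ℕ) (hnm : n ≤ m) :
    ∑ k ∈ Finset.range (min (m - n) n + 1),
        ((m - n).choose k) * (n.choose (n - k)) * ((2 * k).choose n) * ((m - k).choose (n - k)) =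
      ∑ k ∈ Finset.range (min (m - n) n + 1),
        (n.choose k) * ((m - n).choose (n - k)) * ((m - n).choose k) * (n.choose k) := by
  obtain ⟨p, rfl⟩ := Nat.exists_eq_add_of_le' hnm
  rw [Nat.add_sub_cancel,
    sum_range_min_succ_eq fun k hk => by simp [Nat.choose_eq_zero_of_lt hk],
    sum_range_min_succ_eq fun k hk => by simp [Nat.choose_eq_zero_of_lt hk],
    ← sum_range_reflect]
  have expand : ∀ i ∈ range (n + 1),
      p.choose (n + 1 - 1 - i) * n.choose (n - (n + 1 - 1 - i)) *
          (2 * (n + 1 - 1 - i)).choose n *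
          (p + n - (n + 1 - 1 - i)).choose (n - (n + 1 - 1 - i)) =
        ∑ j ∈ range (n + 1),
          n.choose j ^ 2 * ((n - j).choose i * j.choose i * (p + i).choose n) := fun i hi => by
    have hin : i ≤ n := Nat.lt_succ_iff.1 (mem_range.1 hi)
    rw [Nat.add_sub_cancel, Nat.sub_sub_self hin, show p + n - (n - i) = p + i by omega,
      two_mul, add_choose_eq_sum_range, mul_right_comm, mul_sum]
    exact sum_congr rfl fun j hj =>
      choose_product_rearrange p hin (Nat.lt_succ_iff.1 (mem_range.1 hj))
  rw [sum_congr rfl expand, sum_comm]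
  refine sum_congr rfl fun j hj => ?_
  have hjn : j ≤ n := Nat.lt_succ_iff.1 (mem_range.1 hj)
  have riordan := sum_choose_mul_choose_mul_add_choose p (n - j) j
  rw [Nat.sub_add_cancel hjn] at riordan
  have truncate : ∑ i ∈ range (j + 1), (n - j).choose i * j.choose i * (p + i).choose n =
      ∑ i ∈ range (n + 1), (n - j).choose i * j.choose i * (p + i).choose n := by
    have h := sum_range_min_succ_eq (p := j) (n := n)
      (f := fun i => (n - j).choose i * j.choose i * (p + i).choose n)
      fun i hi => by simp [Nat.choose_eq_zero_of_lt hi]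
    rwa [min_eq_left hjn] at h
  rw [← mul_sum, ← truncate, riordan]
  ring
end
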